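/- arXiv:1907.07019 — 3 statements merged into one kernel-verified Lean document; each statement's English description precedes it below -/
import Mathlib

section
/- Suppose S₁ is completely non-measurable, i.e., every nonempty subset of S₁ fails to belong to Σ₀. Then (π₀,π₁) satisfies extended Bayesianism and π₀*(S₁) > 0 if and only if for all F ∈ Σ₀, π₀(F) = 0 implies π₁(F) = 0. -/
open MeasureTheory Set ENNReal

/-- The support of a measure `π` on `(Ω, m)`: the intersection of all `m`-measurable
sets of `π`-measure one. -/
def spt {Ω : Type*} (m : MeasurableSpace Ω) (π : @Measure Ω m) : Set Ω :=
  ⋂₀ {E : Set Ω | @MeasurableSet Ω m E ∧ π E = 1}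

/-- The outer measure on richer events induced by a measure `π` on `(Ω, m)`:
`π*(E) = inf {π F : F m-measurable, E ⊆ F}`. -/
noncomputable def outerM {Ω : Type*} (m : MeasurableSpace Ω) (π : @Measure Ω m)
    (E : Set Ω) : ℝ≥0∞ :=
  ⨅ (F : Set Ω) (_ : @MeasurableSet Ω m F ∧ E ⊆ F), π F

/-- Extended Bayesianism: there is a probability measure `π̄` on the finer σ-algebra `m1`
extending `π₀` (EB1) such that, whenever `π₀*(S₁) > 0`, `π̄(S₁) > 0` and `π₁` is the
conditional of `π̄` on `S₁` (EB2). -/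
def ExtendedBayesianism {Ω : Type*} (m0 m1 : MeasurableSpace Ω)
    (π₀ : @Measure Ω m0) (π₁ : @Measure Ω m1) : Prop :=
  ∃ πb : @Measure Ω m1, @IsProbabilityMeasure Ω m1 πb ∧
    (∀ E : Set Ω, @MeasurableSet Ω m0 E → πb E = π₀ E) ∧
    (0 < outerM m0 π₀ (spt m1 π₁) →
      0 < πb (spt m1 π₁) ∧
      ∀ E : Set Ω, @MeasurableSet Ω m1 E →
        π₁ E = πb (E ∩ spt m1 π₁) / πb (spt m1 π₁))

/-- `π₁` is commensurate to `π₀`: for all `E, F ∈ Σ₀` with `E ⊆ S₁`,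
(C1) `π₀ F = 0 → π₁ F = 0` and (C2) `π₀ E * π₁ F ≤ π₁ E * π₀ F`. -/
def Commensurate {Ω : Type*} (m0 m1 : MeasurableSpace Ω)
    (π₀ : @Measure Ω m0) (π₁ : @Measure Ω m1) : Prop :=
  ∀ E F : Set Ω, @MeasurableSet Ω m0 E → @MeasurableSet Ω m0 F → E ⊆ spt m1 π₁ →
    (π₀ F = 0 → π₁ F = 0) ∧ π₀ E * π₁ F ≤ π₁ E * π₀ F

/-- `π₁` is boundedly commensurate to `π₀`: commensurate, and in addition (C3)
`inf {π₀ F / π₁ F : F ∈ Σ₀, π₁ F > 0} > 0`. -/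
def BoundedlyCommensurate {Ω : Type*} (m0 m1 : MeasurableSpace Ω)
    (π₀ : @Measure Ω m0) (π₁ : @Measure Ω m1) : Prop :=
  Commensurate m0 m1 π₀ π₁ ∧
    0 < ⨅ (F : Set Ω) (_ : @MeasurableSet Ω m0 F ∧ 0 < π₁ F), π₀ F / π₁ F

/-!
Let `m0` have countably many atoms and let `μ` be a measure on `m1` with `μ ≤ π₀` on `m0`. Without
adding mass to a completely non-measurable set `S`, `μ` can be enlarged to an `m1`-measure that
extends `π₀`: every atom of `m0` meets the complement of `S`, so the mass that `π₀ - μ` gives to an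
atom can be put on one of its points outside `S`. Applied to `μ = ε • π₁` and `S = S₁`, this shows
that extended Bayesianism with `π₀*(S₁) > 0` amounts to a bound `ε * π₁ F ≤ π₀ F` on `m0` for some
`ε ≠ 0`; on a finite σ-algebra such a bound is absolute continuity, the ratios `π₀ F / π₁ F` being
finite in number.
-/

/-- A set is completely non-measurable for the σ-algebra `m` if none of its nonempty subsets belongs
to `m`. This lets measures on `m` be extended without charging `S`. Unlike in the paper, `S` need
not be an event of a larger σ-algebra. -/
def IsCompletelyNonMeasurable {Ω : Type*} (m : MeasurableSpace Ω) (S : Set Ω) : Prop :=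
  ∀ F ⊆ S, F.Nonempty → ¬ MeasurableSet[m] F

section Atoms

variable {Ω : Type*} {m : MeasurableSpace Ω} {S : Set Ω} {g : Ω → Ω}

theorem finite_range_measurableAtom [Finite {F : Set Ω // MeasurableSet F}] :
    (range (measurableAtom : Ω → Set Ω)).Finite := by
  refine (finite_range fun T : Set {F : Set Ω // MeasurableSet F} => ⋂ F ∈ T, F.1).subset ?_
  rintro _ ⟨x, rfl⟩
  refine ⟨{F | x ∈ F.1}, ?_⟩
  ext y
  simp only [measurableAtom, mem_iInter, mem_ofPred_eq, Subtype.forall]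
  exact forall_congr' fun F => ⟨fun h hx hF => h hF hx, fun h hF hx => h hx hF⟩

theorem exists_measurableSet_disjoint_measurableAtom {x y : Ω} (hy : y ∉ measurableAtom x) :
    ∃ s, MeasurableSet s ∧ x ∈ s ∧ Disjoint s (measurableAtom y) := by
  obtain ⟨s, hxs, hs, hys⟩ : ∃ s, x ∈ s ∧ MeasurableSet s ∧ y ∉ s := by
    simpa [measurableAtom] using hy
  exact ⟨s, hs, hxs, disjoint_compl_right.mono_right (measurableAtom_subset hs.compl hys)⟩

theorem measurableSet_measurableAtom_of_countable_range
    (hcount : (range (measurableAtom : Ω → Set Ω)).Countable) (x : Ω) :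
    MeasurableSet (measurableAtom x) := by
  let others : Set (Set Ω) := range measurableAtom \ {measurableAtom x}
  have separate : ∀ A ∈ others, ∃ s, MeasurableSet s ∧ x ∈ s ∧ Disjoint s A := by
    rintro _ ⟨⟨y, rfl⟩, hne⟩
    exact exists_measurableSet_disjoint_measurableAtom fun hy => hne (measurableAtom_eq_of_mem hy)
  choose! s hs hxs hsA using separate
  have atom_eq : measurableAtom x = ⋂ A ∈ others, s A := by
    refine (subset_iInter₂ fun A hA => measurableAtom_subset (hs A hA) (hxs A hA)).antisymm ?_
    intro y hy
    by_contra hyx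
    have hA : measurableAtom y ∈ others :=
      ⟨mem_range_self y, fun h => hyx (h ▸ mem_measurableAtom_self y)⟩
    exact (hsA _ hA).notMem_of_mem_left (mem_iInter₂.1 hy _ hA) (mem_measurableAtom_self y)
  rw [atom_eq]
  exact .biInter (hcount.mono sdiff_subset) hs

theorem measurableSet_of_forall_measurableAtom_subset
    (hcount : (range (measurableAtom : Ω → Set Ω)).Countable)
    (hS : ∀ x ∈ S, measurableAtom x ⊆ S) : MeasurableSet S := by
  have union_eq : S = ⋃₀ (measurableAtom '' S) := by
    refine subset_antisymm (fun x hx => ?_) (sUnion_subset (forall_mem_image.2 hS))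
    exact ⟨_, mem_image_of_mem _ hx, mem_measurableAtom_self x⟩
  rw [union_eq]
  exact .sUnion (hcount.mono (image_subset_range _ _)) <| forall_mem_image.2 fun x _ =>
    measurableSet_measurableAtom_of_countable_range hcount x

theorem preimage_eq_self_of_forall_mem_measurableAtom (hg : ∀ x, g x ∈ measurableAtom x)
    {E : Set Ω} (hE : MeasurableSet E) : g ⁻¹' E = E := by
  refine subset_antisymm (fun x hgx => ?_) fun x hx => measurableAtom_subset hE hx (hg x)
  by_contra hx
  exact measurableAtom_subset hE.compl hx (hg x) hgx

theorem IsCompletelyNonMeasurable.exists_measurable_mem_measurableAtom_notMem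
    (hcount : (range (measurableAtom : Ω → Set Ω)).Countable)
    (hS : IsCompletelyNonMeasurable m S) :
    ∃ g : Ω → Ω, Measurable[m, ⊤] g ∧ ∀ x, g x ∈ measurableAtom x ∧ g x ∉ S := by
  have meets_compl : ∀ A : range (measurableAtom : Ω → Set Ω), ∃ y ∈ A.1, y ∉ S := by
    rintro ⟨_, x, rfl⟩
    exact not_subset.1 fun hsub => hS _ hsub ⟨x, mem_measurableAtom_self x⟩
      (measurableSet_measurableAtom_of_countable_range hcount x)
  choose c hc hcS using meets_compl
  refine ⟨c ∘ rangeFactorization measurableAtom, fun B _ => ?_, fun x =>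
    ⟨hc (rangeFactorization measurableAtom x), hcS _⟩⟩
  refine measurableSet_of_forall_measurableAtom_subset hcount fun x hx y hy => ?_
  have same_atom : rangeFactorization measurableAtom y = rangeFactorization measurableAtom x :=
    Subtype.ext (measurableAtom_eq_of_mem hy)
  simpa only [mem_preimage, Function.comp_apply, same_atom] using hx

end Atoms

section Extension

variable {Ω : Type*} {m0 m1 : MeasurableSpace Ω}

theorem trim_le_iff (hle : m0 ≤ m1) {μ : Measure[m1] Ω} {ν : Measure[m0] Ω} :
    μ.trim hle ≤ ν ↔ ∀ E, MeasurableSet[m0] E → μ E ≤ ν E := by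
  rw [Measure.le_iff]
  exact forall₂_congr fun E hE => by rw [trim_measurableSet_eq hle hE]

theorem trim_map_of_forall_mem_measurableAtom (hle : m0 ≤ m1) (ν : Measure[m0] Ω) {g : Ω → Ω}
    (hgm : Measurable[m0, m1] g) (hg : ∀ x, g x ∈ @measurableAtom Ω m0 x) :
    (@Measure.map Ω Ω m0 m1 g ν).trim hle = ν := by
  refine @Measure.ext Ω m0 _ _ fun E hE => ?_
  rw [trim_measurableSet_eq hle hE, Measure.map_apply hgm (hle E hE),
    preimage_eq_self_of_forall_mem_measurableAtom hg hE]

theorem IsCompletelyNonMeasurable.exists_extension {S : Set Ω} (hle : m0 ≤ m1)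
    (hcount : (range (@measurableAtom Ω m0)).Countable) (hS : IsCompletelyNonMeasurable m0 S)
    (hSm : MeasurableSet[m1] S) {π : Measure[m0] Ω} {μ : Measure[m1] Ω}
    [IsFiniteMeasure (μ.trim hle)] (hμπ : μ.trim hle ≤ π) :
    ∃ πb : Measure[m1] Ω, πb.trim hle = π ∧ ∀ E ⊆ S, πb E = μ E := by
  obtain ⟨g, hgm, hg⟩ := hS.exists_measurable_mem_measurableAtom_notMem hcount
  have hgm1 : Measurable[m0, m1] g := fun B _ => hgm trivial
  let ρ : Measure[m1] Ω := @Measure.map Ω Ω m0 m1 g (π - μ.trim hle)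
  have ρ_trim : ρ.trim hle = π - μ.trim hle :=
    trim_map_of_forall_mem_measurableAtom hle _ hgm1 fun x => (hg x).1
  have ρ_null : ρ S = 0 := by
    have preimage_empty : g ⁻¹' S = ∅ := eq_empty_of_forall_notMem fun x => (hg x).2
    rw [Measure.map_apply hgm1 hSm, preimage_empty, measure_empty]
  refine ⟨ρ + μ, ?_, fun E hES => ?_⟩
  · rw [trim_add, ρ_trim, Measure.sub_add_cancel_of_le hμπ]
  · rw [Measure.add_apply, measure_mono_null hES ρ_null, zero_add]

end Extension

theorem exists_smul_le_of_absolutelyContinuous {Ω : Type*} {m : MeasurableSpace Ω}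
    [Finite {F : Set Ω // MeasurableSet F}] {μ ν : Measure Ω} [IsFiniteMeasure μ] (hμν : μ ≪ ν) :
    ∃ ε : ℝ≥0∞, ε ≠ 0 ∧ ε • μ ≤ ν := by
  let I := {F : {F : Set Ω // MeasurableSet F} // μ F ≠ 0}
  let ratio : I → ℝ≥0∞ := fun F => ν F.1 / μ F.1
  refine ⟨⨅ F, ratio F, ?_, Measure.le_iff.2 fun F hF => ?_⟩
  · have ratio_pos : ∀ F, 0 < ratio F := fun F =>
      ENNReal.div_pos (mt (@hμν F.1) F.2) (measure_ne_top μ _)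
    rcases isEmpty_or_nonempty I with hI | hI
    · rw [iInf_of_empty]
      exact top_ne_zero
    · obtain ⟨F, hF⟩ := exists_eq_ciInf_of_finite (f := ratio)
      exact hF ▸ (ratio_pos F).ne'
  · rw [Measure.smul_apply, smul_eq_mul]
    by_cases hμF : μ F = 0
    · simp only [hμF, mul_zero, zero_le]
    · exact ENNReal.mul_le_of_le_div (iInf_le ratio ⟨⟨F, hF⟩, hμF⟩)

section Support

variable {Ω : Type*} {m : MeasurableSpace Ω} {π : Measure[m] Ω}

theorem measure_compl_spt [Countable Ω] [IsProbabilityMeasure π] : π (spt m π)ᶜ = 0 := by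
  rw [← biUnion_of_singleton (spt m π)ᶜ, measure_biUnion_null_iff (to_countable _)]
  intro x hx
  obtain ⟨E, ⟨hE, hE1⟩, hxE⟩ : ∃ E, (MeasurableSet E ∧ π E = 1) ∧ x ∉ E := by
    simpa only [spt, mem_compl_iff, mem_sInter, mem_ofPred_eq, not_forall, exists_prop] using hx
  exact measure_mono_null (singleton_subset_iff.2 hxE) ((prob_compl_eq_zero_iff hE).2 hE1)

theorem measurableSet_spt [IsProbabilityMeasure π] (hπ : π (spt m π)ᶜ = 0) :
    MeasurableSet (spt m π) := by
  obtain ⟨N, hsub, hN, hN0⟩ := exists_measurable_superset_of_null hπ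
  have spt_subset : spt m π ⊆ Nᶜ :=
    sInter_subset_of_mem ⟨hN.compl, (prob_compl_eq_one_iff hN).2 hN0⟩
  exact spt_subset.antisymm (compl_subset_comm.1 hsub) ▸ hN.compl

theorem measure_eq_one_of_spt_subset [IsProbabilityMeasure π] (hπ : π (spt m π)ᶜ = 0)
    {F : Set Ω} (hF : spt m π ⊆ F) : π F = 1 := by
  rw [measure_of_measure_compl_eq_zero (measure_mono_null (compl_subset_compl.2 hF) hπ),
    measure_univ]

end Support

section ExtendedBayesianism

variable {Ω : Type*} {m0 m1 : MeasurableSpace Ω}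
  {π₀ : Measure[m0] Ω} {π₁ : Measure[m1] Ω}

theorem ExtendedBayesianism.exists_mul_le (hle : m0 ≤ m1) (hEB : ExtendedBayesianism m0 m1 π₀ π₁)
    (hpos : 0 < outerM m0 π₀ (spt m1 π₁)) :
    ∃ ε : ℝ≥0∞, ε ≠ 0 ∧ ∀ F, MeasurableSet[m0] F → ε * π₁ F ≤ π₀ F := by
  obtain ⟨πb, _, hext, hcond⟩ := hEB
  obtain ⟨hSpos, hπ₁⟩ := hcond hpos
  refine ⟨πb (spt m1 π₁), hSpos.ne', fun F hF => ?_⟩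
  calc πb (spt m1 π₁) * π₁ F = πb (F ∩ spt m1 π₁) := by
        rw [hπ₁ F (hle F hF), ENNReal.mul_div_cancel hSpos.ne' (measure_ne_top _ _)]
    _ ≤ πb F := measure_mono inter_subset_left
    _ = π₀ F := hext F hF

theorem outerM_spt_pos_of_mul_le [IsProbabilityMeasure π₁] (hπ₁ : π₁ (spt m1 π₁)ᶜ = 0)
    {ε : ℝ≥0∞} (hε : ε ≠ 0) (hbound : ∀ F, MeasurableSet[m0] F → ε * π₁ F ≤ π₀ F) :
    0 < outerM m0 π₀ (spt m1 π₁) := by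
  refine (pos_iff_ne_zero.2 hε).trans_le (le_iInf₂ fun F hF => ?_)
  simpa only [measure_eq_one_of_spt_subset hπ₁ hF.2, mul_one] using hbound F hF.1

theorem extendedBayesianism_of_mul_le (hle : m0 ≤ m1)
    (hcount : (range (@measurableAtom Ω m0)).Countable)
    [IsProbabilityMeasure π₀] [IsProbabilityMeasure π₁]
    (hS : IsCompletelyNonMeasurable m0 (spt m1 π₁)) (hπ₁ : π₁ (spt m1 π₁)ᶜ = 0)
    {ε : ℝ≥0∞} (hε : ε ≠ 0) (hbound : ∀ F, MeasurableSet[m0] F → ε * π₁ F ≤ π₀ F) :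
    ExtendedBayesianism m0 m1 π₀ π₁ := by
  have trim_le : (ε • π₁).trim hle ≤ π₀ := (trim_le_iff hle).2 hbound
  have : IsFiniteMeasure ((ε • π₁).trim hle) := isFiniteMeasure_of_le π₀ trim_le
  have ε_ne_top : ε ≠ ⊤ := by
    have hε1 : ε * π₁ univ ≤ π₀ univ := hbound univ .univ
    rw [measure_univ, measure_univ, mul_one] at hε1
    exact ne_top_of_le_ne_top one_ne_top hε1
  obtain ⟨πb, πb_trim, πb_eq⟩ := hS.exists_extension hle hcount (measurableSet_spt hπ₁) trim_le
  have πb_ext : ∀ E, MeasurableSet[m0] E → πb E = π₀ E := fun E hE => by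
    rw [← trim_measurableSet_eq hle hE, πb_trim]
  have πb_inter : ∀ E, πb (E ∩ spt m1 π₁) = ε * π₁ E := fun E => by
    rw [πb_eq _ inter_subset_right, Measure.smul_apply, smul_eq_mul, measure_inter_conull hπ₁]
  have πb_spt : πb (spt m1 π₁) = ε := by
    rw [← univ_inter (spt m1 π₁), πb_inter, measure_univ, mul_one]
  refine ⟨πb, ⟨(πb_ext univ .univ).trans measure_univ⟩, πb_ext, fun _ => ⟨?_, fun E _ => ?_⟩⟩
  · rw [πb_spt]
    exact pos_iff_ne_zero.2 hε
  · rw [πb_inter, πb_spt, mul_comm, ENNReal.mul_div_cancel_right hε ε_ne_top]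

theorem extendedBayesianism_iff_exists_mul_le (hle : m0 ≤ m1)
    (hcount : (range (@measurableAtom Ω m0)).Countable)
    [IsProbabilityMeasure π₀] [IsProbabilityMeasure π₁]
    (hS : IsCompletelyNonMeasurable m0 (spt m1 π₁)) (hπ₁ : π₁ (spt m1 π₁)ᶜ = 0) :
    (ExtendedBayesianism m0 m1 π₀ π₁ ∧ 0 < outerM m0 π₀ (spt m1 π₁)) ↔
      ∃ ε : ℝ≥0∞, ε ≠ 0 ∧ ∀ F, MeasurableSet[m0] F → ε * π₁ F ≤ π₀ F :=
  ⟨fun ⟨hEB, hpos⟩ => hEB.exists_mul_le hle hpos, fun ⟨_, hε, hbound⟩ =>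
    ⟨extendedBayesianism_of_mul_le hle hcount hS hπ₁ hε hbound,
      outerM_spt_pos_of_mul_le hπ₁ hε hbound⟩⟩

theorem exists_mul_le_iff_absCont (hle : m0 ≤ m1) [Finite {F : Set Ω // MeasurableSet[m0] F}]
    [IsFiniteMeasure π₁] :
    (∃ ε : ℝ≥0∞, ε ≠ 0 ∧ ∀ F, MeasurableSet[m0] F → ε * π₁ F ≤ π₀ F) ↔
      ∀ F, MeasurableSet[m0] F → π₀ F = 0 → π₁ F = 0 := by
  constructor
  · rintro ⟨ε, hε, hbound⟩ F hF hF0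
    have hmul : ε * π₁ F = 0 := le_zero_iff.1 ((hbound F hF).trans_eq hF0)
    exact (mul_eq_zero.1 hmul).resolve_left hε
  · intro hac
    have trim_ac : π₁.trim hle ≪ π₀ := .mk fun F hF hF0 => by
      rw [trim_measurableSet_eq hle hF, hac F hF hF0]
    have := isFiniteMeasure_trim (μ := π₁) hle
    obtain ⟨ε, hε, hbound⟩ := exists_smul_le_of_absolutelyContinuous trim_ac
    refine ⟨ε, hε, fun F hF => ?_⟩
    simpa only [Measure.smul_apply, smul_eq_mul, trim_measurableSet_eq hle hF] using hbound F

theorem extendedBayesianism_iff_absCont_of_completelyNonMeasurable_general (hle : m0 ≤ m1)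
    [Finite {F : Set Ω // MeasurableSet[m0] F}]
    [IsProbabilityMeasure π₀] [IsProbabilityMeasure π₁]
    (hS : IsCompletelyNonMeasurable m0 (spt m1 π₁)) (hπ₁ : π₁ (spt m1 π₁)ᶜ = 0) :
    (ExtendedBayesianism m0 m1 π₀ π₁ ∧ 0 < outerM m0 π₀ (spt m1 π₁)) ↔
      ∀ F, MeasurableSet[m0] F → π₀ F = 0 → π₁ F = 0 :=
  (extendedBayesianism_iff_exists_mul_le hle (@finite_range_measurableAtom Ω m0 _).countable
    hS hπ₁).trans (exists_mul_le_iff_absCont hle)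

end ExtendedBayesianism

/-- Corollary 1: if `S₁` is completely non-measurable (no nonempty subset of
`S₁` belongs to `Σ₀`), then `(π₀, π₁)` satisfies extended Bayesianism with `π₀*(S₁) > 0`
iff absolute continuity (C1) holds. -/
theorem extendedBayesianism_iff_absCont_of_completelyNonMeasurable {Ω : Type*} [Finite Ω]
    (m0 m1 : MeasurableSpace Ω) (hle : m0 ≤ m1)
    (π₀ : @Measure Ω m0) (π₁ : @Measure Ω m1)
    (h₀ : @IsProbabilityMeasure Ω m0 π₀) (h₁ : @IsProbabilityMeasure Ω m1 π₁)
    (hnm : ∀ F : Set Ω, F ⊆ spt m1 π₁ → F.Nonempty → ¬ @MeasurableSet Ω m0 F) :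
    (ExtendedBayesianism m0 m1 π₀ π₁ ∧ 0 < outerM m0 π₀ (spt m1 π₁)) ↔
      (∀ F : Set Ω, @MeasurableSet Ω m0 F → π₀ F = 0 → π₁ F = 0) :=
  extendedBayesianism_iff_absCont_of_completelyNonMeasurable_general hle hnm measure_compl_spt
end

section
/- Suppose (π₀,π₁) satisfies extended Bayesianism and π₀*(S₁) > 0. Let a, b ≥ 0 be real numbers and E, F ∈ Σ₀ be such that a·π₀(F) ≥ b·π₀(E) and b·π₁(E) > a·π₁(F). Then the set G = F ∩ S₁ᶜ belongs to Σ₁, satisfies G ⊆ F, π₁(G) = 0, and π₀*(G) > 0 (equivalently, every H ∈ Σ₀ with G ⊆ H has π₀(H) > 0); that is, F contains a discarded sub-event. -/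
open MeasureTheory Set ENNReal

/-!
Condition (EB1) says that `π₀` is the restriction of `π̄` to the coarser σ-algebra, and (EB2) that
`π₁` is the conditional measure `π̄[|S₁]`. If `π̄ (F ∩ S₁ᶜ)` vanished, conditioning on `S₁` would
scale `π̄ F` by exactly `1 / π̄ S₁`, and `π̄ E` by at most that factor, so a bet on `F` weakly
preferred to a bet on `E` beforehand would remain so. A reversal therefore forces
`0 < π̄ (F ∩ S₁ᶜ)`, and restricting a measure to a coarser σ-algebra can only increase its outer
measure.
-/

section

open ProbabilityTheory

variable {Ω : Type*} {m : MeasurableSpace Ω}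

theorem measurableSet_sInter_of_countable [Countable Ω] {C : Set (Set Ω)}
    (hC : ∀ t ∈ C, MeasurableSet t) : MeasurableSet (⋂₀ C) := by
  have exists_separating (x : ↥(⋂₀ C)ᶜ) : ∃ t ∈ C, (x : Ω) ∉ t := by
    simpa only [mem_compl_iff, mem_sInter, not_forall, exists_prop] using x.2
  choose t ht hxt using exists_separating
  have sInter_eq : ⋂₀ C = ⋂ x, t x := by
    refine Subset.antisymm (subset_iInter fun x => sInter_subset_of_mem (ht x)) fun y hy => ?_
    by_contra hyC
    exact hxt ⟨y, hyC⟩ (mem_iInter.mp hy ⟨y, hyC⟩)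
  exact sInter_eq ▸ MeasurableSet.iInter fun x => hC _ (ht x)

theorem measurableSet_spt_s9 [Countable Ω] (π : Measure Ω) : MeasurableSet (spt m π) :=
  measurableSet_sInter_of_countable fun _ ht => ht.1

theorem outerM_eq_measure (π : Measure Ω) (E : Set Ω) : outerM m π E = π E := by
  rw [outerM, measure_eq_iInf]
  exact iInf_congr fun F => by rw [iInf_and, iInf_comm]

theorem measure_inter_compl_pos_of_cond_reversal {μ : Measure Ω} {S E F : Set Ω} {a b : ℝ≥0∞}
    (hS : MeasurableSet S) (prior : b * μ E ≤ a * μ F)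
    (posterior : a * μ[F | S] < b * μ[E | S]) : 0 < μ (F ∩ Sᶜ) := by
  refine pos_iff_ne_zero.mpr fun null => posterior.not_ge ?_
  have measure_inter_eq : μ (S ∩ F) = μ F := by
    rw [inter_comm, measure_inter_conull' null]
  calc b * μ[E | S]
      = (μ S)⁻¹ * (b * μ (S ∩ E)) := by rw [cond_apply hS, mul_left_comm]
    _ ≤ (μ S)⁻¹ * (b * μ E) := by gcongr; exact inter_subset_right
    _ ≤ (μ S)⁻¹ * (a * μ F) := by gcongr
    _ = a * μ[F | S] := by rw [cond_apply hS, measure_inter_eq, mul_left_comm]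

end

section

open ProbabilityTheory

variable {Ω : Type*} {m0 m1 : MeasurableSpace Ω} {π₀ : Measure[m0] Ω} {π₁ : Measure[m1] Ω}

theorem ExtendedBayesianism.exists_trim_eq_and_eq_cond (hEB : ExtendedBayesianism m0 m1 π₀ π₁)
    (hle : m0 ≤ m1) (hS : MeasurableSet[m1] (spt m1 π₁)) (hpos : 0 < outerM m0 π₀ (spt m1 π₁)) :
    ∃ πb : Measure[m1] Ω, πb.trim hle = π₀ ∧ π₁ = πb[|spt m1 π₁] := by
  obtain ⟨πb, -, extends_prior, update⟩ := hEB
  refine ⟨πb, ?_, ?_⟩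
  · refine @Measure.ext Ω m0 _ _ fun E hE => ?_
    rw [trim_measurableSet_eq hle hE, extends_prior E hE]
  · refine Measure.ext fun E hE => ?_
    rw [cond_apply hS, (update hpos).2 E hE, inter_comm, ENNReal.div_eq_inv_mul]

theorem reversal_implies_discarded_general
    (hle : m0 ≤ m1) (hS : MeasurableSet[m1] (spt m1 π₁))
    (hEB : ExtendedBayesianism m0 m1 π₀ π₁) (hpos : 0 < outerM m0 π₀ (spt m1 π₁))
    {a b : NNReal} {E F : Set Ω} (hF : MeasurableSet[m0] F)
    (prior : (b : ℝ≥0∞) * π₀ E ≤ (a : ℝ≥0∞) * π₀ F)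
    (posterior : (a : ℝ≥0∞) * π₁ F < (b : ℝ≥0∞) * π₁ E) :
    MeasurableSet[m1] (F ∩ (spt m1 π₁)ᶜ) ∧ F ∩ (spt m1 π₁)ᶜ ⊆ F ∧
      π₁ (F ∩ (spt m1 π₁)ᶜ) = 0 ∧ 0 < outerM m0 π₀ (F ∩ (spt m1 π₁)ᶜ) ∧
      (∀ H : Set Ω, MeasurableSet[m0] H → F ∩ (spt m1 π₁)ᶜ ⊆ H → 0 < π₀ H) := by
  obtain ⟨πb, trim_eq, eq_cond⟩ := hEB.exists_trim_eq_and_eq_cond hle hS hpos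
  have le_prior (A : Set Ω) : πb A ≤ π₀ A := trim_eq ▸ le_trim hle
  have prior_ext : (b : ℝ≥0∞) * πb E ≤ a * πb F :=
    calc (b : ℝ≥0∞) * πb E ≤ b * π₀ E := by gcongr; exact le_prior E
      _ ≤ a * π₀ F := prior
      _ = a * πb F := by rw [← trim_eq, trim_measurableSet_eq hle hF]
  have null_compl : π₁ (spt m1 π₁)ᶜ = 0 := by
    nth_rw 1 [eq_cond]
    exact ae_cond_mem hS
  have discarded_pos : 0 < π₀ (F ∩ (spt m1 π₁)ᶜ) :=
    calc 0 < πb (F ∩ (spt m1 π₁)ᶜ) :=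
          measure_inter_compl_pos_of_cond_reversal hS prior_ext (eq_cond ▸ posterior)
      _ ≤ π₀ (F ∩ (spt m1 π₁)ᶜ) := le_prior _
  exact ⟨(hle F hF).inter hS.compl, inter_subset_left,
    measure_mono_null inter_subset_right null_compl,
    (outerM_eq_measure π₀ _).symm ▸ discarded_pos,
    fun H _ hGH => discarded_pos.trans_le (measure_mono hGH)⟩

end

/-- under extended Bayesianism with `π₀*(S₁) > 0`, a preference reversal
over bets (`a·π₀ F ≥ b·π₀ E` but `b·π₁ E > a·π₁ F` for some stakes `a, b ≥ 0`) implies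
`G = F ∩ S₁ᶜ` is a discarded sub-event of `F`: `G ∈ Σ₁`, `G ⊆ F`, `π₁ G = 0` and
`π₀* G > 0` (equivalently every `H ∈ Σ₀` containing `G` has `π₀ H > 0`). -/
theorem reversal_implies_discarded {Ω : Type*} [Finite Ω]
    (m0 m1 : MeasurableSpace Ω) (hle : m0 ≤ m1)
    (π₀ : @Measure Ω m0) (π₁ : @Measure Ω m1)
    (h₀ : @IsProbabilityMeasure Ω m0 π₀) (h₁ : @IsProbabilityMeasure Ω m1 π₁)
    (hEB : ExtendedBayesianism m0 m1 π₀ π₁) (hpos : 0 < outerM m0 π₀ (spt m1 π₁))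
    (a b : NNReal) (E F : Set Ω) (hE : @MeasurableSet Ω m0 E) (hF : @MeasurableSet Ω m0 F)
    (h0 : (b : ℝ≥0∞) * π₀ E ≤ (a : ℝ≥0∞) * π₀ F)
    (h1 : (a : ℝ≥0∞) * π₁ F < (b : ℝ≥0∞) * π₁ E) :
    @MeasurableSet Ω m1 (F ∩ (spt m1 π₁)ᶜ) ∧ F ∩ (spt m1 π₁)ᶜ ⊆ F ∧
      π₁ (F ∩ (spt m1 π₁)ᶜ) = 0 ∧ 0 < outerM m0 π₀ (F ∩ (spt m1 π₁)ᶜ) ∧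
      (∀ H : Set Ω, @MeasurableSet Ω m0 H → F ∩ (spt m1 π₁)ᶜ ⊆ H → 0 < π₀ H) := by
  exact reversal_implies_discarded_general hle (measurableSet_spt_s9 π₁) hEB hpos hF h0 h1
end

section
/- Suppose π₁ is commensurate to π₀ and there exists a nonempty E ∈ Σ₀ with E ⊆ S₁; set β = π₀(E)/π₁(E) (which is well defined since π₁(E) > 0). Then for all F, F' ∈ Σ₀ with F ∩ S₁ᶜ = F' ∩ S₁ᶜ, one has π₀(F) − β·π₁(F) = π₀(F') − β·π₁(F'), and this common value is nonnegative. -/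
open MeasureTheory Set ENNReal

/-!
Condition (C2) says that the ratio of `π₀` to `π₁` is smallest on the `Σ₀`-events inside `S₁`.
Comparing two such events both ways shows that on them `π₀ = β π₁`, so that `π₀ - β π₁` does not
see them, while comparing `E` with an arbitrary event gives `β π₁ ≤ π₀`.
If `F` and `F'` agree outside `S₁`, then `F \ F'` and `F' \ F` are events inside `S₁`, and so
`π₀ - β π₁` takes at `F` and at `F'` the value it takes at `F ∩ F'`.
-/

/-- The ratio of `μ` to `ν` is minimal on the measurable subsets of `S`: for measurable `E ⊆ S`
and `F`, the ratio `μ E / ν E` is at most `μ F / ν F`. This is (C2) for an arbitrary set `S` in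
place of the support; the ratios are compared by cross-multiplication, which avoids dividing
by `0`. -/
def RatioMinimalOn {Ω : Type*} {_ : MeasurableSpace Ω} (μ ν : Measure Ω) (S : Set Ω) : Prop :=
  ∀ ⦃E⦄, MeasurableSet E → E ⊆ S → ∀ ⦃F⦄, MeasurableSet F → μ E * ν F ≤ ν E * μ F

theorem sdiff_subset_of_inter_compl_eq {α : Type*} {s t u : Set α} (h : s ∩ uᶜ = t ∩ uᶜ) :
    s \ t ⊆ u := by
  rw [sdiff_subset_comm, sdiff_eq, h]
  exact inter_subset_left

theorem measure_pos_of_nonempty_of_subset_spt {Ω : Type*} {m : MeasurableSpace Ω} {π : Measure Ω}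
    [IsProbabilityMeasure π] {E : Set Ω} (hE : MeasurableSet E) (hne : E.Nonempty)
    (hsub : E ⊆ spt m π) : 0 < π E := by
  refine pos_iff_ne_zero.2 fun hzero => ?_
  obtain ⟨x, hx⟩ := hne
  have hspt : spt m π ⊆ Eᶜ := sInter_subset_of_mem ⟨hE.compl, (prob_compl_eq_one_iff hE).2 hzero⟩
  exact hspt (hsub hx) hx

theorem measureReal_sub_mul_eq_inter {Ω : Type*} {m : MeasurableSpace Ω} {μ ν : Measure Ω}
    [IsFiniteMeasure μ] [IsFiniteMeasure ν] {β : ℝ} {F F' : Set Ω} (hF' : MeasurableSet F')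
    (hβ : μ.real (F \ F') = β * ν.real (F \ F')) :
    μ.real F - β * ν.real F = μ.real (F ∩ F') - β * ν.real (F ∩ F') := by
  rw [← measureReal_inter_add_sdiff (μ := μ) (s := F) hF',
    ← measureReal_inter_add_sdiff (μ := ν) (s := F) hF', hβ]
  ring

theorem measureReal_trim {Ω : Type*} {m0 m1 : MeasurableSpace Ω} {μ : Measure[m1] Ω}
    (hle : m0 ≤ m1) {F : Set Ω} (hF : MeasurableSet[m0] F) : (μ.trim hle).real F = μ.real F :=
  congrArg ENNReal.toReal (trim_measurableSet_eq hle hF)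

namespace RatioMinimalOn

variable {Ω : Type*} {m : MeasurableSpace Ω} {μ ν : Measure Ω} {S D E F F' : Set Ω}

theorem mul_eq_mul (h : RatioMinimalOn μ ν S) (hD : MeasurableSet D) (hDS : D ⊆ S)
    (hE : MeasurableSet E) (hES : E ⊆ S) : μ E * ν D = ν E * μ D := by
  refine le_antisymm (h hE hES hD) ?_
  simpa only [mul_comm] using h hD hDS hE

theorem measureReal_eq_div_mul (h : RatioMinimalOn μ ν S) (hE : MeasurableSet E) (hES : E ⊆ S)
    (hνE : ν.real E ≠ 0) (hD : MeasurableSet D) (hDS : D ⊆ S) :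
    μ.real D = μ.real E / ν.real E * ν.real D := by
  have hcross : μ.real E * ν.real D = ν.real E * μ.real D := by
    simpa only [Measure.real, toReal_mul] using congrArg ENNReal.toReal (h.mul_eq_mul hD hDS hE hES)
  rw [div_mul_eq_mul_div, hcross, mul_div_cancel_left₀ _ hνE]

variable [IsFiniteMeasure μ] [IsFiniteMeasure ν]

theorem div_mul_measureReal_le (h : RatioMinimalOn μ ν S) (hE : MeasurableSet E) (hES : E ⊆ S)
    (hF : MeasurableSet F) : μ.real E / ν.real E * ν.real F ≤ μ.real F := by
  have hcross : μ.real E * ν.real F ≤ ν.real E * μ.real F := by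
    simpa only [Measure.real, toReal_mul] using toReal_mono (by finiteness) (h hE hES hF)
  rw [div_mul_eq_mul_div]
  exact div_le_of_le_mul₀ measureReal_nonneg measureReal_nonneg (hcross.trans_eq (mul_comm _ _))

theorem measureReal_sub_div_mul_congr (h : RatioMinimalOn μ ν S) (hE : MeasurableSet E)
    (hES : E ⊆ S) (hνE : ν.real E ≠ 0) (hF : MeasurableSet F) (hF' : MeasurableSet F')
    (hFF' : F ∩ Sᶜ = F' ∩ Sᶜ) :
    μ.real F - μ.real E / ν.real E * ν.real F =
      μ.real F' - μ.real E / ν.real E * ν.real F' := by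
  have hdiff : μ.real (F \ F') = μ.real E / ν.real E * ν.real (F \ F') :=
    h.measureReal_eq_div_mul hE hES hνE (hF.diff hF') (sdiff_subset_of_inter_compl_eq hFF')
  have hdiff' : μ.real (F' \ F) = μ.real E / ν.real E * ν.real (F' \ F) :=
    h.measureReal_eq_div_mul hE hES hνE (hF'.diff hF) (sdiff_subset_of_inter_compl_eq hFF'.symm)
  rw [measureReal_sub_mul_eq_inter hF' hdiff, measureReal_sub_mul_eq_inter hF hdiff', inter_comm]

end RatioMinimalOn

theorem Commensurate.ratioMinimalOn_trim {Ω : Type*} {m0 m1 : MeasurableSpace Ω}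
    {π₀ : Measure[m0] Ω} {π₁ : Measure[m1] Ω} (hc : Commensurate m0 m1 π₀ π₁) (hle : m0 ≤ m1) :
    RatioMinimalOn π₀ (π₁.trim hle) (spt m1 π₁) := by
  intro E hE hES F hF
  rw [trim_measurableSet_eq hle hE, trim_measurableSet_eq hle hF]
  exact (hc E F hE hF hES).2

theorem welldefined_remainder_general {Ω : Type*} {m0 m1 : MeasurableSpace Ω} (hle : m0 ≤ m1)
    {π₀ : Measure[m0] Ω} {π₁ : Measure[m1] Ω} [IsFiniteMeasure π₀] [IsProbabilityMeasure π₁]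
    (h : RatioMinimalOn π₀ (π₁.trim hle) (spt m1 π₁))
    {E : Set Ω} (hE : MeasurableSet[m0] E) (hEne : E.Nonempty) (hES : E ⊆ spt m1 π₁) :
    0 < π₁ E ∧
      ∀ F F' : Set Ω, MeasurableSet[m0] F → MeasurableSet[m0] F' →
        F ∩ (spt m1 π₁)ᶜ = F' ∩ (spt m1 π₁)ᶜ →
        π₀.real F - π₀.real E / π₁.real E * π₁.real F
            = π₀.real F' - π₀.real E / π₁.real E * π₁.real F' ∧
          0 ≤ π₀.real F - π₀.real E / π₁.real E * π₁.real F := by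
  have hpos : 0 < π₁ E := measure_pos_of_nonempty_of_subset_spt (hle E hE) hEne hES
  have htrim : (π₁.trim hle).real E ≠ 0 := by
    rw [measureReal_trim hle hE]
    exact (toReal_pos hpos.ne' (measure_ne_top π₁ E)).ne'
  refine ⟨hpos, fun F F' hF hF' hFF' => ?_⟩
  rw [← measureReal_trim hle hE, ← measureReal_trim hle hF, ← measureReal_trim hle hF']
  exact ⟨h.measureReal_sub_div_mul_congr hE hES htrim hF hF' hFF',
    sub_nonneg.2 (h.div_mul_measureReal_le hE hES hF)⟩

/-- well-definedness step of Theorem 3: if `π₁` is commensurate to `π₀`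
and `E ∈ Σ₀` is nonempty with `E ⊆ S₁`, then with `β = π₀ E / π₁ E` (well defined since
`π₁ E > 0`), for all `F, F' ∈ Σ₀` with `F ∩ S₁ᶜ = F' ∩ S₁ᶜ` one has
`π₀ F − β·π₁ F = π₀ F' − β·π₁ F'`, and this common value is nonnegative. -/
theorem welldefined_remainder {Ω : Type*} [Countable Ω]
    (m0 m1 : MeasurableSpace Ω) (hle : m0 ≤ m1)
    (π₀ : @Measure Ω m0) (π₁ : @Measure Ω m1)
    (h₀ : @IsProbabilityMeasure Ω m0 π₀) (h₁ : @IsProbabilityMeasure Ω m1 π₁)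
    (hc : Commensurate m0 m1 π₀ π₁)
    (E : Set Ω) (hE : @MeasurableSet Ω m0 E) (hEne : E.Nonempty) (hES : E ⊆ spt m1 π₁) :
    0 < π₁ E ∧
      ∀ F F' : Set Ω, @MeasurableSet Ω m0 F → @MeasurableSet Ω m0 F' →
        F ∩ (spt m1 π₁)ᶜ = F' ∩ (spt m1 π₁)ᶜ →
        (π₀ F).toReal - ((π₀ E).toReal / (π₁ E).toReal) * (π₁ F).toReal
            = (π₀ F').toReal - ((π₀ E).toReal / (π₁ E).toReal) * (π₁ F').toReal ∧
          0 ≤ (π₀ F).toReal - ((π₀ E).toReal / (π₁ E).toReal) * (π₁ F).toReal :=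
  welldefined_remainder_general hle (hc.ratioMinimalOn_trim hle) hE hEne hES
end
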